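/- Under Assumptions 1 and 2, let L > 0 be such that c is 1/(4L)-cocoercive on P, and suppose the CumLog dynamics are run with finite initial valuation s^0 ∈ ℝ^K and step sizes satisfying r η^t < 1/(2L) for all t ≥ 0. Then for every p* ∈ P*, the sequence D(p*, p^t) is nonincreasing in t (hence converges), and ‖p^t − p^{t+1}‖₂ → 0 as t → ∞. -/

import Mathlib

open Finset Filter Topology

/-!
Write `γ = r η^t`. The logit choice turns the valuation update into an entropic mirror step, so with
`p = p^t` and `p' = p^{t+1}` the three-point identity gives, for a solution `p*`,
`D(p*, p') = D(p*, p) - D(p', p) - γ ⟨c p, p' - p*⟩`.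
If `c` is `μ`-cocoercive, Young's inequality bounds `⟨c p, p' - p*⟩` below by
`-‖p' - p‖² / (4 μ)`. Pinsker's inequality bounds `D(p', p)` below by `‖p' - p‖²`: each of the two
is a sum over OD pairs, and `2 ‖v‖₂² ≤ ‖v‖₁²` for a vector `v` with zero sum. Hence, if `γ ≤ 4 μ θ`
with `θ < 1`, then `D(p*, p^t)` drops by at least `(1 - θ) ‖p' - p‖²`.

The second claim also needs a solution `p*` to exist. Sion's minimax theorem gives a point that
satisfies finitely many of the Minty inequalities `⟨c y, x - y⟩ ≤ 0`, compactness one that satisfies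
all of them, and continuity of `c`, a consequence of cocoercivity, makes that point a solution.
-/

section VariationalInequality

lemma sum_mul_apply_sub_sum_smul_nonpos {ι V : Type*} [Fintype ι] [AddCommGroup V] [Module ℝ V]
    {C : Set V} {F : V → V →ₗ[ℝ] ℝ} (hC : Convex ℝ C)
    (hF : ∀ x ∈ C, ∀ y ∈ C, F x (y - x) ≤ F y (y - x)) {y : ι → V} (hy : ∀ i, y i ∈ C)
    {l : ι → ℝ} (hl : l ∈ stdSimplex ℝ ι) :
    ∑ i, l i * F (y i) (∑ j, l j • y j - y i) ≤ 0 := by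
  set z := ∑ j, l j • y j with hz
  have hzC : z ∈ C := hC.sum_mem (fun i _ ↦ hl.1 i) hl.2 fun i _ ↦ hy i
  calc ∑ i, l i * F (y i) (z - y i) ≤ ∑ i, l i * F z (z - y i) :=
        sum_le_sum fun i _ ↦ mul_le_mul_of_nonneg_left (hF _ (hy i) z hzC) (hl.1 i)
    _ = F z ((∑ i, l i) • z - ∑ i, l i • y i) := by
      simp only [sum_smul, ← sum_sub_distrib, ← smul_sub, map_sum, map_smul, smul_eq_mul]
    _ = 0 := by rw [hl.2, one_smul, ← hz, sub_self, map_zero]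

variable {V : Type*} [TopologicalSpace V] [AddCommGroup V] [IsTopologicalAddGroup V] [Module ℝ V]
  [ContinuousSMul ℝ V] {C : Set V}

lemma exists_isSaddlePointOn_sum_mul_apply_sub {ι : Type*} [Fintype ι] [Nonempty ι]
    (hC : Convex ℝ C) (hCc : IsCompact C) (hCne : C.Nonempty) (g : ι → V →L[ℝ] ℝ) (y : ι → V) :
    ∃ x ∈ C, ∃ l ∈ stdSimplex ℝ ι,
      IsSaddlePointOn C (stdSimplex ℝ ι) (fun x l ↦ ∑ i, l i * g i (x - y i)) x l := by
  classical
  refine Sion.exists_isSaddlePointOn hCne hC hCc (fun l _ ↦ ?_) (fun l _ ↦ ?_)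
    (convex_stdSimplex ℝ ι) ⟨_, single_mem_stdSimplex ℝ (Classical.arbitrary ι)⟩
    (isCompact_stdSimplex ℝ ι) (fun x _ ↦ ?_) (fun x _ ↦ ?_)
  · exact Continuous.lowerSemicontinuous (by fun_prop) |>.lowerSemicontinuousOn _
  · refine ConvexOn.quasiconvexOn ⟨hC, fun x _ x' _ a b _ _ hab ↦ le_of_eq ?_⟩
    simp only [smul_eq_mul, mul_sum, ← sum_add_distrib, map_sub, map_add, map_smul]
    refine sum_congr rfl fun i _ ↦ ?_
    linear_combination l i * g i (y i) * hab
  · exact Continuous.upperSemicontinuous (by fun_prop) |>.upperSemicontinuousOn _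
  · refine ConcaveOn.quasiconcaveOn
      ⟨convex_stdSimplex ℝ ι, fun l _ l' _ a b _ _ _ ↦ le_of_eq ?_⟩
    simp only [smul_eq_mul, mul_sum, ← sum_add_distrib, Pi.add_apply, Pi.smul_apply]
    exact sum_congr rfl fun i _ ↦ by ring

variable {F : V → V →L[ℝ] ℝ}

lemma exists_forall_apply_sub_nonpos_of_finite {ι : Type*} [Finite ι] (hC : Convex ℝ C)
    (hCc : IsCompact C) (hCne : C.Nonempty)
    (hF : ∀ x ∈ C, ∀ y ∈ C, F x (y - x) ≤ F y (y - x)) {y : ι → V} (hy : ∀ i, y i ∈ C) :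
    ∃ x ∈ C, ∀ i, F (y i) (x - y i) ≤ 0 := by
  classical
  cases nonempty_fintype ι
  cases isEmpty_or_nonempty ι
  · exact ⟨hCne.some, hCne.some_mem, isEmptyElim⟩
  obtain ⟨x, hx, l, hl, hsaddle⟩ :=
    exists_isSaddlePointOn_sum_mul_apply_sub hC hCc hCne (fun i ↦ F (y i)) y
  refine ⟨x, hx, fun i ↦ ?_⟩
  have hbarycenter : ∑ j, l j • y j ∈ C := hC.sum_mem (fun i _ ↦ hl.1 i) hl.2 fun i _ ↦ hy i
  calc F (y i) (x - y i) = ∑ j, (Pi.single i 1 : ι → ℝ) j * F (y j) (x - y j) := by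
        simp [Pi.single_apply]
    _ ≤ ∑ j, l j * F (y j) (∑ k, l k • y k - y j) :=
      hsaddle _ hbarycenter _ (single_mem_stdSimplex ℝ i)
    _ ≤ 0 := sum_mul_apply_sub_sum_smul_nonpos (F := fun x ↦ (F x : V →ₗ[ℝ] ℝ)) hC hF hy hl

lemma apply_sub_nonneg_of_forall_apply_sub_nonpos (hC : Convex ℝ C)
    (hF : ∀ v, ContinuousOn (fun x ↦ F x v) C) {x y : V} (hx : x ∈ C) (hy : y ∈ C)
    (hxC : ∀ z ∈ C, F z (x - z) ≤ 0) : 0 ≤ F x (y - x) := by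
  let z (τ : ℝ) : V := x + τ • (y - x)
  have hzC {τ : ℝ} (hτ : τ ∈ Set.Icc (0 : ℝ) 1) : z τ ∈ C := hC.add_smul_sub_mem hx hy hτ
  have hcont : ContinuousOn (fun τ ↦ F (z τ) (y - x)) (Set.Icc 0 1) :=
    (hF _).comp (Continuous.continuousOn (by fun_prop)) fun _ ↦ hzC
  have hlim : Tendsto (fun τ ↦ F (z τ) (y - x)) (𝓝[>] 0) (𝓝 (F x (y - x))) := by
    rw [← nhdsWithin_Ioc_eq_nhdsGT one_pos]
    simpa [z] using (hcont 0 (by simp)).mono_left (nhdsWithin_mono 0 Set.Ioc_subset_Icc_self)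
  refine ge_of_tendsto hlim ?_
  filter_upwards [Ioc_mem_nhdsGT one_pos] with τ hτ
  have hneg : -(τ * F (z τ) (y - x)) ≤ 0 := by
    simpa [z] using hxC (z τ) (hzC (Set.Ioc_subset_Icc_self hτ))
  exact nonneg_of_mul_nonneg_right (neg_nonpos.1 hneg) hτ.1

theorem exists_forall_apply_sub_nonneg (hC : Convex ℝ C) (hCc : IsCompact C) (hCne : C.Nonempty)
    (hFc : ∀ v, ContinuousOn (fun x ↦ F x v) C)
    (hF : ∀ x ∈ C, ∀ y ∈ C, F x (y - x) ≤ F y (y - x)) :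
    ∃ x ∈ C, ∀ y ∈ C, 0 ≤ F x (y - x) := by
  obtain ⟨x, hx, hminty⟩ : (C ∩ ⋂ y : C, {x | F y (x - y) ≤ 0}).Nonempty := by
    refine hCc.inter_iInter_nonempty _ (fun y ↦ isClosed_le (by fun_prop) continuous_const)
      fun s ↦ ?_
    obtain ⟨x, hx, hxs⟩ := exists_forall_apply_sub_nonpos_of_finite hC hCc hCne hF
      (y := fun y : s ↦ (y : C)) fun y ↦ y.1.2
    exact ⟨x, hx, Set.mem_iInter₂.2 fun y hy ↦ hxs ⟨y, hy⟩⟩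
  simp only [Set.mem_iInter, Subtype.forall, Set.mem_ofPred_eq] at hminty
  exact ⟨x, hx, fun y hy ↦ apply_sub_nonneg_of_forall_apply_sub_nonpos hC hFc hx hy hminty⟩

end VariationalInequality

section Cocoercive

variable {K : Type*} [Fintype K]

/-- `c` is `μ`-cocoercive on `C` for the Euclidean inner product. It is written in coordinates
because the norm of `K → ℝ` is the sup norm. -/
def CocoerciveOn (μ : ℝ) (c : (K → ℝ) → K → ℝ) (C : Set (K → ℝ)) : Prop :=
  ∀ x ∈ C, ∀ y ∈ C, μ * ∑ k, (c y k - c x k) ^ 2 ≤ (c y - c x) ⬝ᵥ (y - x)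

/-- The solutions on `C` of the variational inequality of `c`. For a route cost function these are
the equilibria `P*`. -/
def variationalSolutions (c : (K → ℝ) → K → ℝ) (C : Set (K → ℝ)) : Set (K → ℝ) :=
  {x ∈ C | ∀ y ∈ C, 0 ≤ c x ⬝ᵥ (y - x)}

variable {μ : ℝ} {c : (K → ℝ) → K → ℝ} {C : Set (K → ℝ)}

namespace CocoerciveOn

lemma dotProduct_sub_le (hμ : 0 ≤ μ) (hc : CocoerciveOn μ c C) {x y : K → ℝ} (hx : x ∈ C)
    (hy : y ∈ C) : c x ⬝ᵥ (y - x) ≤ c y ⬝ᵥ (y - x) := by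
  rw [← sub_nonneg, ← sub_dotProduct]
  exact (by positivity : 0 ≤ μ * ∑ k, (c y k - c x k) ^ 2).trans (hc x hx y hy)

lemma sum_sq_sub_le (hμ : 0 < μ) (hc : CocoerciveOn μ c C) {x y : K → ℝ} (hx : x ∈ C)
    (hy : y ∈ C) : μ ^ 2 * ∑ k, (c y k - c x k) ^ 2 ≤ ∑ k, (y k - x k) ^ 2 := by
  set a := ∑ k, (c y k - c x k) ^ 2
  have ha : 0 ≤ a := by positivity
  have hcauchy : (μ * a) ^ 2 ≤ a * ∑ k, (y k - x k) ^ 2 :=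
    (pow_le_pow_left₀ (by positivity) (hc x hx y hy) 2).trans
      (sum_mul_sq_le_sq_mul_sq univ (fun k ↦ c y k - c x k) fun k ↦ y k - x k)
  rcases ha.eq_or_lt with ha | ha
  · rw [← ha, mul_zero]
    positivity
  · refine le_of_mul_le_mul_left ?_ ha
    linarith

lemma continuousOn (hμ : 0 < μ) (hc : CocoerciveOn μ c C) : ContinuousOn c C := by
  refine continuousOn_pi.2 fun k x hx ↦ tendsto_iff_dist_tendsto_zero.2 ?_
  have hlim : Tendsto (fun y : K → ℝ ↦ √(∑ j, (y j - x j) ^ 2) / μ) (𝓝[C] x) (𝓝 0) := by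
    have hcont : Continuous fun y : K → ℝ ↦ √(∑ j, (y j - x j) ^ 2) / μ := by fun_prop
    simpa using (hcont.tendsto x).mono_left nhdsWithin_le_nhds
  refine squeeze_zero' (Eventually.of_forall fun _ ↦ dist_nonneg) ?_ hlim
  filter_upwards [self_mem_nhdsWithin] with y hy
  rw [le_div_iff₀ hμ]
  refine Real.le_sqrt_of_sq_le ?_
  rw [Real.dist_eq, mul_pow, sq_abs, mul_comm]
  calc μ ^ 2 * (c y k - c x k) ^ 2 ≤ μ ^ 2 * ∑ j, (c y j - c x j) ^ 2 := by
        gcongr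
        exact single_le_sum (f := fun j ↦ (c y j - c x j) ^ 2) (fun _ _ ↦ sq_nonneg _)
          (mem_univ k)
    _ ≤ ∑ j, (y j - x j) ^ 2 := hc.sum_sq_sub_le hμ hx hy

theorem variationalSolutions_nonempty (hμ : 0 < μ) (hc : CocoerciveOn μ c C) (hC : Convex ℝ C)
    (hCc : IsCompact C) (hCne : C.Nonempty) : (variationalSolutions c C).Nonempty :=
  exists_forall_apply_sub_nonneg (F := fun x ↦ (dotProductBilin ℝ ℝ (c x)).toContinuousLinearMap)
    hC hCc hCne (fun _ ↦ continuousOn_finsetSum _ fun k _ ↦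
      ((continuous_apply k).comp_continuousOn (hc.continuousOn hμ)).mul continuousOn_const)
    fun _ hx _ hy ↦ hc.dotProduct_sub_le hμ.le hx hy

lemma neg_sum_sq_le_dotProduct_sub (hμ : 0 < μ) (hc : CocoerciveOn μ c C) {x y z : K → ℝ}
    (hx : x ∈ variationalSolutions c C) (hy : y ∈ C) (hz : z ∈ C) :
    -(∑ k, (z k - y k) ^ 2) ≤ 4 * μ * c y ⬝ᵥ (z - x) := by
  have hyoung : 0 ≤ 4 * μ * (μ * ∑ k, (c y k - c x k) ^ 2) +
      4 * μ * (c y - c x) ⬝ᵥ (z - y) + ∑ k, (z k - y k) ^ 2 := calc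
    0 ≤ ∑ k, (2 * μ * (c y k - c x k) + (z k - y k)) ^ 2 := by positivity
    _ = _ := by
      simp only [dotProduct, Pi.sub_apply, mul_sum, ← sum_add_distrib]
      exact sum_congr rfl fun k _ ↦ by ring
  have hsplit : c y ⬝ᵥ (z - x) =
      (c y - c x) ⬝ᵥ (y - x) + (c y - c x) ⬝ᵥ (z - y) + c x ⬝ᵥ (z - x) := by
    simp only [sub_dotProduct, dotProduct_sub]
    ring
  rw [hsplit]
  nlinarith [hc x hx.1 y hy, hx.2 z hz]

end CocoerciveOn

end Cocoercive

section RelativeEntropy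

open InformationTheory Real

variable {K : Type*}

lemma three_mul_sub_one_sq_le_klFun {x : ℝ} (hx : 0 ≤ x) :
    3 * (x - 1) ^ 2 ≤ 2 * (x + 2) * klFun x := by
  let f (y : ℝ) : ℝ := 2 * (y + 2) * klFun y - 3 * (y - 1) ^ 2
  let f' (y : ℝ) : ℝ := 2 * klFun y + 2 * (y + 2) * log y - 6 * (y - 1)
  have hf {y : ℝ} (hy : 0 < y) : HasDerivAt f (f' y) y := by
    refine (((((hasDerivAt_id y).add_const 2).const_mul 2).mul (hasDerivAt_klFun hy.ne')).sub
      ((((hasDerivAt_id y).sub_const 1).pow 2).const_mul 3)).congr_deriv ?_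
    simp only [f', id]
    ring
  have hf' {y : ℝ} (hy : 0 < y) : HasDerivAt f' (4 * (log y - (1 - y⁻¹))) y := by
    refine ((((hasDerivAt_klFun hy.ne').const_mul 2).add
      ((((hasDerivAt_id y).add_const 2).const_mul 2).mul (Real.hasDerivAt_log hy.ne'))).sub
        (((hasDerivAt_id y).sub_const 1).const_mul 6)).congr_deriv ?_
    simp only [id]
    field_simp
    ring
  have hconv : ConvexOn ℝ (Set.Ici 0) f := by
    refine convexOn_of_hasDerivWithinAt2_nonneg (f' := f')
      (f'' := fun y ↦ 4 * (log y - (1 - y⁻¹))) (convex_Ici 0) ?_ ?_ ?_ ?_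
    · have := continuous_klFun
      exact Continuous.continuousOn (by fun_prop)
    all_goals
      rw [interior_Ici]
      intro y hy
    · exact (hf hy).hasDerivWithinAt
    · exact (hf' hy).hasDerivWithinAt
    · exact mul_nonneg (by norm_num) (sub_nonneg.2 (Real.one_sub_inv_le_log_of_pos hy))
  have hmin : IsMinOn f (Set.Ici 0) 1 := by
    refine hconv.isMinOn_of_rightDeriv_eq_zero (by simp) ?_
    rw [(hf one_pos).hasDerivWithinAt.derivWithin (uniqueDiffWithinAt_Ioi 1)]
    simp [f', klFun_one]
  have hf1 : f 1 = 0 := by simp [f, klFun_one]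
  exact sub_nonneg.1 (hf1 ▸ hmin hx)

lemma three_mul_sub_sq_le_mul_log_sub_log {a b : ℝ} (ha : 0 ≤ a) (hb : 0 < b) :
    3 * (a - b) ^ 2 ≤ 2 * (a + 2 * b) * (a * (log a - log b) - a + b) := by
  have hkl : b * klFun (a / b) = a * (log a - log b) - a + b := by
    rcases ha.eq_or_lt with rfl | ha
    · simp [klFun_zero]
    · rw [klFun_apply, Real.log_div ha.ne' hb.ne']
      field_simp
      ring
  calc 3 * (a - b) ^ 2 = b ^ 2 * (3 * (a / b - 1) ^ 2) := by field_simp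
    _ ≤ b ^ 2 * (2 * (a / b + 2) * klFun (a / b)) := by
      exact mul_le_mul_of_nonneg_left (three_mul_sub_one_sq_le_klFun (by positivity)) (sq_nonneg b)
    _ = 2 * (a + 2 * b) * (b * klFun (a / b)) := by field_simp
    _ = _ := by rw [hkl]

lemma sum_abs_sub_sq_le_two_mul_sum_mul_log_sub_log {s : Finset K} {a b : K → ℝ}
    (ha : ∀ k ∈ s, 0 ≤ a k) (hb : ∀ k ∈ s, 0 < b k) (hab : ∑ k ∈ s, a k = ∑ k ∈ s, b k) :
    (∑ k ∈ s, |a k - b k|) ^ 2 ≤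
      2 * (∑ k ∈ s, b k) * ∑ k ∈ s, a k * (log (a k) - log (b k)) := by
  have hterm (k : K) (hk : k ∈ s) := three_mul_sub_sq_le_mul_log_sub_log (ha k hk) (hb k hk)
  have hweight (k : K) (hk : k ∈ s) : 0 < 2 * (a k + 2 * b k) := by
    linarith [ha k hk, hb k hk]
  have hcauchy : (∑ k ∈ s, |a k - b k|) ^ 2 ≤ (∑ k ∈ s, 2 * (a k + 2 * b k) / 3) *
      ∑ k ∈ s, (a k * (log (a k) - log (b k)) - a k + b k) := by
    refine sum_sq_le_sum_mul_sum_of_sq_le_mul s (fun k hk ↦ ?_) (fun k hk ↦ ?_) fun k hk ↦ ?_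
    · linarith [hweight k hk]
    · exact nonneg_of_mul_nonneg_right ((by positivity : (0 : ℝ) ≤ _).trans (hterm k hk))
        (hweight k hk)
    · rw [sq_abs]
      linarith [hterm k hk]
  refine hcauchy.trans_eq ?_
  rw [← sum_div, ← mul_sum, sum_add_distrib, sum_add_distrib, sum_sub_distrib, ← mul_sum, hab]
  ring

lemma two_mul_sum_sq_le_sum_abs_sq {s : Finset K} {v : K → ℝ} (hv : ∑ k ∈ s, v k = 0) :
    2 * ∑ k ∈ s, v k ^ 2 ≤ (∑ k ∈ s, |v k|) ^ 2 := by
  classical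
  have hcoord (k : K) (hk : k ∈ s) : 2 * |v k| ≤ ∑ j ∈ s, |v j| := by
    rw [← add_sum_erase s _ hk] at hv
    have herase : |v k| ≤ ∑ j ∈ s.erase k, |v j| := by
      rw [eq_neg_of_add_eq_zero_left hv, abs_neg]
      exact abs_sum_le_sum_abs _ _
    rw [← add_sum_erase s _ hk]
    linarith
  rw [sq (∑ k ∈ s, |v k|), mul_sum, mul_sum]
  refine sum_le_sum fun k hk ↦ ?_
  nlinarith [hcoord k hk, abs_nonneg (v k), sq_abs (v k)]

lemma sum_sq_sub_le_mul_sum_mul_log_sub_log {s : Finset K} {a b : K → ℝ}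
    (ha : ∀ k ∈ s, 0 ≤ a k) (hb : ∀ k ∈ s, 0 < b k) (hab : ∑ k ∈ s, a k = ∑ k ∈ s, b k) :
    ∑ k ∈ s, (a k - b k) ^ 2 ≤
      (∑ k ∈ s, b k) * ∑ k ∈ s, a k * (log (a k) - log (b k)) := by
  have hl2 := two_mul_sum_sq_le_sum_abs_sq (s := s) (v := fun k ↦ a k - b k)
    (by rw [sum_sub_distrib, hab, sub_self])
  linarith [sum_abs_sub_sq_le_two_mul_sum_mul_log_sub_log ha hb hab]

variable [Fintype K]

/-- The Kullback–Leibler divergence `D(a, b)`. The convention `0 · log 0 = 0` is built in, since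
`Real.log 0 = 0`; the value is only meaningful when all components of `b` are positive. -/
noncomputable def relEntropy (a b : K → ℝ) : ℝ := ∑ k, a k * (log (a k) - log (b k))

lemma relEntropy_sub_sub (a b b' : K → ℝ) :
    relEntropy a b - relEntropy a b' - relEntropy b' b =
      (a - b') ⬝ᵥ fun k ↦ log (b' k) - log (b k) := by
  simp only [relEntropy, dotProduct, Pi.sub_apply, ← sum_sub_distrib]
  exact sum_congr rfl fun k _ ↦ by ring

end RelativeEntropy

lemma tendsto_zero_of_add_mul_le {D g : ℕ → ℝ} {ε l : ℝ} (hε : 0 < ε) (hg : ∀ t, 0 ≤ g t)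
    (hD : Tendsto D atTop (𝓝 l)) (hdescent : ∀ t, D (t + 1) + ε * g t ≤ D t) :
    Tendsto g atTop (𝓝 0) := by
  have hgap : Tendsto (fun t ↦ (D t - D (t + 1)) / ε) atTop (𝓝 0) := by
    simpa using (hD.sub (hD.comp (tendsto_add_atTop_nat 1))).div_const ε
  refine squeeze_zero hg (fun t ↦ ?_) hgap
  rw [le_div_iff₀ hε]
  linarith [hdescent t]

section RoutingGame

variable {W K : Type*} [DecidableEq W] [Fintype K] {ω : K → W}

/-- The strategy set `P`: a probability vector over the routes of each OD pair. -/
def strategySet (ω : K → W) : Set (K → ℝ) :=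
  {p | (∀ k, 0 ≤ p k) ∧ ∀ w, ∑ k with ω k = w, p k = 1}

/-- The logit choice `q_r(s)`: on the routes of each OD pair, the softmax of `-r s`. -/
noncomputable def logitChoice (ω : K → W) (r : ℝ) (s : K → ℝ) (k : K) : ℝ :=
  Real.exp (-r * s k) / ∑ k' with ω k' = ω k, Real.exp (-r * s k')

lemma convex_strategySet : Convex ℝ (strategySet ω) := by
  rintro p ⟨hp, hp1⟩ p' ⟨hp', hp1'⟩ a b ha hb hab
  refine ⟨fun k ↦ add_nonneg (mul_nonneg ha (hp k)) (mul_nonneg hb (hp' k)), fun w ↦ ?_⟩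
  simp only [Pi.add_apply, Pi.smul_apply, smul_eq_mul, sum_add_distrib, ← mul_sum, hp1, hp1',
    mul_one, hab]

lemma isCompact_strategySet : IsCompact (strategySet ω) := by
  have hclosed : IsClosed (strategySet ω) := by
    simp only [strategySet, Set.ofPred_and, Set.ofPred_forall]
    exact (isClosed_iInter fun k ↦ isClosed_le continuous_const (continuous_apply k)).inter
      (isClosed_iInter fun w ↦ isClosed_eq (by fun_prop) continuous_const)
  refine isCompact_Icc (a := (0 : K → ℝ)) (b := 1) |>.of_isClosed_subset hclosed ?_
  rintro p ⟨hp, hp1⟩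
  refine ⟨hp, fun k ↦ ?_⟩
  exact (single_le_sum (fun j _ ↦ hp j) (by simp)).trans_eq (hp1 (ω k))

lemma logitChoice_pos (r : ℝ) (s : K → ℝ) (k : K) : 0 < logitChoice ω r s k :=
  div_pos (Real.exp_pos _) (sum_pos (fun _ _ ↦ Real.exp_pos _) ⟨k, by simp⟩)

lemma logitChoice_mem_strategySet (hω : Function.Surjective ω) (r : ℝ) (s : K → ℝ) :
    logitChoice ω r s ∈ strategySet ω := by
  refine ⟨fun k ↦ (logitChoice_pos r s k).le, fun w ↦ ?_⟩
  obtain ⟨k₀, rfl⟩ := hω w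
  have hfiber : ∀ k ∈ univ.filter (ω · = ω k₀), logitChoice ω r s k =
      Real.exp (-r * s k) / ∑ k' with ω k' = ω k₀, Real.exp (-r * s k') := by
    intro k hk
    rw [logitChoice, (mem_filter.1 hk).2]
  rw [sum_congr rfl hfiber, ← sum_div]
  exact div_self (sum_pos (fun _ _ ↦ Real.exp_pos _) ⟨k₀, by simp⟩).ne'

lemma log_logitChoice (r : ℝ) (s : K → ℝ) (k : K) : Real.log (logitChoice ω r s k) =
    -r * s k - Real.log (∑ k' with ω k' = ω k, Real.exp (-r * s k')) := by
  have hsum : 0 < ∑ k' with ω k' = ω k, Real.exp (-r * s k') :=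
    sum_pos (fun _ _ ↦ Real.exp_pos _) ⟨k, by simp⟩
  rw [logitChoice, Real.log_div (Real.exp_pos _).ne' hsum.ne', Real.log_exp]

lemma sub_dotProduct_comp_eq_zero {a b : K → ℝ} (ha : a ∈ strategySet ω) (hb : b ∈ strategySet ω)
    (g : W → ℝ) : (a - b) ⬝ᵥ (g ∘ ω) = 0 := by
  rw [dotProduct, ← sum_fiberwise_of_maps_to fun k ↦ mem_image_of_mem ω]
  refine sum_eq_zero fun w _ ↦ ?_
  calc ∑ k with ω k = w, (a - b) k * (g ∘ ω) k
      = ∑ k with ω k = w, (a k - b k) * g w :=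
        sum_congr rfl fun k hk ↦ by simp [(mem_filter.1 hk).2]
    _ = 0 := by rw [← sum_mul, sum_sub_distrib, ha.2, hb.2, sub_self, zero_mul]

lemma sum_sq_sub_le_relEntropy {a b : K → ℝ} (ha : a ∈ strategySet ω) (hb : b ∈ strategySet ω)
    (hb_pos : ∀ k, 0 < b k) : ∑ k, (a k - b k) ^ 2 ≤ relEntropy a b := by
  have hmaps (k : K) : k ∈ univ → ω k ∈ univ.image ω := mem_image_of_mem ω
  rw [relEntropy, ← sum_fiberwise_of_maps_to hmaps,
    ← sum_fiberwise_of_maps_to hmaps fun k ↦ a k * _]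
  refine sum_le_sum fun w _ ↦ ?_
  simpa only [hb.2 w, one_mul] using sum_sq_sub_le_mul_sum_mul_log_sub_log (fun k _ ↦ ha.1 k)
    (fun k _ ↦ hb_pos k) ((ha.2 w).trans (hb.2 w).symm)

lemma relEntropy_logitChoice_add_smul (hω : Function.Surjective ω) {a : K → ℝ}
    (ha : a ∈ strategySet ω) (r η : ℝ) (s g : K → ℝ) :
    relEntropy a (logitChoice ω r (s + η • g)) =
      relEntropy a (logitChoice ω r s) -
        relEntropy (logitChoice ω r (s + η • g)) (logitChoice ω r s) -
        r * η * g ⬝ᵥ (logitChoice ω r (s + η • g) - a) := by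
  set p := logitChoice ω r s
  set p' := logitChoice ω r (s + η • g)
  let logZ (s : K → ℝ) (w : W) : ℝ := Real.log (∑ k with ω k = w, Real.exp (-r * s k))
  have hlog : (fun k ↦ Real.log (p' k) - Real.log (p k)) =
      (-(r * η)) • g + (logZ s - logZ (s + η • g)) ∘ ω := by
    ext k
    simp only [p, p', log_logitChoice, logZ, Pi.add_apply, Pi.sub_apply, Pi.smul_apply,
      Function.comp_apply, smul_eq_mul]
    ring
  have hthree := relEntropy_sub_sub a p p'
  rw [hlog, dotProduct_add, sub_dotProduct_comp_eq_zero ha (logitChoice_mem_strategySet hω _ _),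
    dotProduct_smul, smul_eq_mul, add_zero, dotProduct_comm, ← neg_sub p', dotProduct_neg] at hthree
  linarith

variable {c : (K → ℝ) → K → ℝ} {μ r θ : ℝ}

lemma relEntropy_add_mul_sum_sq_le (hω : Function.Surjective ω) (hμ : 0 < μ)
    (hc : CocoerciveOn μ c (strategySet ω)) {η : ℝ} (hη : 0 ≤ r * η) (hstep : r * η ≤ 4 * μ * θ)
    {a : K → ℝ} (ha : a ∈ variationalSolutions c (strategySet ω)) (s : K → ℝ) {p p' : K → ℝ}
    (hp : p = logitChoice ω r s) (hp' : p' = logitChoice ω r (s + η • c p)) :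
    relEntropy a p' + (1 - θ) * ∑ k, (p' k - p k) ^ 2 ≤ relEntropy a p := by
  have hpC : p ∈ strategySet ω := hp ▸ logitChoice_mem_strategySet hω r s
  have hpC' : p' ∈ strategySet ω := hp' ▸ logitChoice_mem_strategySet hω r _
  have hthree : relEntropy a p' = relEntropy a p - relEntropy p' p - r * η * c p ⬝ᵥ (p' - a) := by
    simpa only [← hp, ← hp'] using relEntropy_logitChoice_add_smul hω ha.1 r η s (c p)
  have hpinsker : ∑ k, (p' k - p k) ^ 2 ≤ relEntropy p' p :=
    sum_sq_sub_le_relEntropy hpC' hpC fun k ↦ hp ▸ logitChoice_pos r s k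
  have hcoco : -(θ * ∑ k, (p' k - p k) ^ 2) ≤ r * η * c p ⬝ᵥ (p' - a) := by
    have hyoung := hc.neg_sum_sq_le_dotProduct_sub hμ ha hpC hpC'
    have hsq : 0 ≤ ∑ k, (p' k - p k) ^ 2 := by positivity
    refine le_of_mul_le_mul_left ?_ (by positivity : 0 < 4 * μ)
    nlinarith [mul_le_mul_of_nonneg_left hyoung hη, mul_le_mul_of_nonneg_right hstep hsq]
  linarith

end RoutingGame

theorem stmt_12_general {W K : Type*} [Fintype K] [DecidableEq W] {ω : K → W}
    (hω : Function.Surjective ω) {c : (K → ℝ) → K → ℝ} {μ : ℝ} (hμ : 0 < μ)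
    (hc : CocoerciveOn μ c (strategySet ω)) {r θ : ℝ} (hθ : θ < 1) {η : ℕ → ℝ}
    (hη : ∀ t, 0 ≤ r * η t) (hstep : ∀ t, r * η t ≤ 4 * μ * θ) {s p : ℕ → K → ℝ}
    (hp : ∀ t, p t = logitChoice ω r (s t)) (hs : ∀ t, s (t + 1) = s t + η t • c (p t)) :
    (∀ pstar ∈ variationalSolutions c (strategySet ω),
        Antitone (fun t ↦ relEntropy pstar (p t)) ∧
        ∃ l : ℝ, Tendsto (fun t ↦ relEntropy pstar (p t)) atTop (𝓝 l)) ∧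
      Tendsto (fun t ↦ √(∑ k, (p t k - p (t + 1) k) ^ 2)) atTop (𝓝 0) := by
  have hpC (t : ℕ) : p t ∈ strategySet ω := hp t ▸ logitChoice_mem_strategySet hω r (s t)
  have hdescent {a : K → ℝ} (ha : a ∈ variationalSolutions c (strategySet ω)) (t : ℕ) :
      relEntropy a (p (t + 1)) + (1 - θ) * ∑ k, (p (t + 1) k - p t k) ^ 2 ≤ relEntropy a (p t) :=
    relEntropy_add_mul_sum_sq_le hω hμ hc (hη t) (hstep t) ha (s t) (hp t) (hs t ▸ hp (t + 1))
  have hanti {a : K → ℝ} (ha : a ∈ variationalSolutions c (strategySet ω)) :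
      Antitone fun t ↦ relEntropy a (p t) := by
    refine antitone_nat_of_succ_le fun t ↦ le_of_add_le_of_nonneg_left (hdescent ha t) ?_
    exact mul_nonneg (sub_pos.2 hθ).le (by positivity)
  have hconv {a : K → ℝ} (ha : a ∈ variationalSolutions c (strategySet ω)) :
      ∃ l, Tendsto (fun t ↦ relEntropy a (p t)) atTop (𝓝 l) := by
    refine ⟨_, tendsto_atTop_ciInf (hanti ha) ⟨0, Set.forall_mem_range.2 fun t ↦ ?_⟩⟩
    exact (by positivity : 0 ≤ ∑ k, (a k - p t k) ^ 2).trans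
      (sum_sq_sub_le_relEntropy ha.1 (hpC t) fun k ↦ hp t ▸ logitChoice_pos r (s t) k)
  refine ⟨fun a ha ↦ ⟨hanti ha, hconv ha⟩, ?_⟩
  obtain ⟨a, ha⟩ := hc.variationalSolutions_nonempty hμ convex_strategySet isCompact_strategySet
    ⟨p 0, hpC 0⟩
  obtain ⟨l, hl⟩ := hconv ha
  have hsq := tendsto_zero_of_add_mul_le (sub_pos.2 hθ) (fun t ↦ by positivity) hl (hdescent ha)
  simpa only [Real.sqrt_zero, sub_sq_comm] using hsq.sqrt

theorem stmt_12
    {W K E : Type*} [Fintype W] [Fintype K] [Fintype E]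
    [DecidableEq W] [DecidableEq E]
    [Nonempty W] [Nonempty K]
    (ω : K → W) (hω : Function.Surjective ω)
    (Λ : E → K → ℝ) (hΛ : ∀ e k, Λ e k = 0 ∨ Λ e k = 1)
    (d : W → ℝ) (hd : ∀ w, 0 < d w)
    (u : (E → ℝ) → (E → ℝ))
    (P : Set (K → ℝ))
    (hP : P = {p : K → ℝ | (∀ k, 0 ≤ p k) ∧
      ∀ w, ∑ k ∈ Finset.univ.filter (fun k => ω k = w), p k = 1})
    (Λbar : E → K → ℝ) (hΛbar : ∀ e k, Λbar e k = d (ω k) * Λ e k)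
    (c : (K → ℝ) → K → ℝ)
    (hc : ∀ p k, c p k = ∑ e, Λ e k * u (fun e' => ∑ k', Λbar e' k' * p k') e)
    (X : Set (E → ℝ)) (hX : X = (fun p e => ∑ k, Λbar e k * p k) '' P)
    (hu1 : ∃ U : Set (E → ℝ), IsOpen U ∧ X ⊆ U ∧ ContDiffOn ℝ 2 u U)
    (hu2 : ∀ x ∈ X,
      (∀ v : E → ℝ, 0 ≤ ∑ i, ∑ j, v i * (fderiv ℝ u x (Pi.single j (1 : ℝ)) i) * v j) ∧
      (∀ v : E → ℝ, 0 ≤ ∑ i, ∑ j,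
        v i * (∑ m, fderiv ℝ u x (Pi.single m (1 : ℝ)) i *
          fderiv ℝ u x (Pi.single j (1 : ℝ)) m) * v j))
    (L : ℝ) (hL : 0 < L)
    (hcoco : ∀ a ∈ P, ∀ b ∈ P,
      (1 / (4 * L)) * ∑ k, (c b k - c a k) ^ 2 ≤ ∑ k, (c b k - c a k) * (b k - a k))
    (q : ℝ → (K → ℝ) → K → ℝ)
    (hq : ∀ (rr : ℝ) (ss : K → ℝ) (k : K),
      q rr ss k = Real.exp (-rr * ss k) /
        ∑ k' ∈ Finset.univ.filter (fun k' => ω k' = ω k), Real.exp (-rr * ss k'))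
    (Pstar : Set (K → ℝ))
    (hPstar : Pstar = {ps ∈ P | ∀ pp ∈ P, 0 ≤ ∑ k, c ps k * (pp k - ps k)})
    (D : (K → ℝ) → (K → ℝ) → ℝ)
    (hD : ∀ a b, D a b = ∑ k, a k * (Real.log (a k) - Real.log (b k)))
    (r : ℝ) (hr : 0 < r)
    (η : ℕ → ℝ) (hη : ∀ t, 0 < η t)
    (s : ℕ → K → ℝ) (p : ℕ → K → ℝ)
    (hp : ∀ t, p t = q r (s t))
    (hs : ∀ t, s (t + 1) = fun k => s t k + η t * c (p t) k)
    (hstep : ∀ t, r * η t < 1 / (2 * L)) :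
    (∀ pstar ∈ Pstar,
        Antitone (fun t => D pstar (p t)) ∧
        ∃ l : ℝ, Tendsto (fun t => D pstar (p t)) atTop (nhds l)) ∧
      Tendsto (fun t => Real.sqrt (∑ k, (p t k - p (t + 1) k) ^ 2)) atTop (nhds 0) := by
  obtain rfl : D = relEntropy := funext₂ hD
  obtain rfl : q = logitChoice ω := by
    ext rr ss k
    exact hq rr ss k
  subst hP hPstar
  refine stmt_12_general hω (by positivity : 0 < 1 / (4 * L)) hcoco (θ := 1 / 2) (by norm_num)
    (fun t ↦ (mul_pos hr (hη t)).le) (fun t ↦ (hstep t).le.trans_eq ?_) hp hs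
  field_simp
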